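/- Let n ≥ 2. In M_{n²}(ℂ) with its standard (entrywise) topology, let 𝔯 denote the set of solutions of the quantum Yang–Baxter equation and let 𝔯′ denote the set of matrices satisfying the modified quantum Yang–Baxter equation for some nonzero parameter λ ∈ ℂ. Then the closure of 𝔯′ minus 𝔯′ is contained in 𝔯: every matrix that is a limit of solutions of the modified equation but is not itself a solution of the modified equation (for any nonzero λ) satisfies the quantum Yang–Baxter equation. (Such solutions are called boundary solutions of the quantum Yang–Baxter equation.) -/

import Mathlib

/-!
Write the modified equation as `F R = l • G R`, where `F` and `G` are continuous. Linear dependence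
of two vectors is a closed condition, so for `R` in the closure of the solutions either `G R = 0` or
`F R = l • G R` for some `l`. In the latter case `l = 0` as soon as `R` is not a solution for a
nonzero parameter, and then `F R = 0`, which is the quantum Yang–Baxter equation. In the former case
`R` is a multiple of the flip matrix, and the flip satisfies the quantum Yang–Baxter equation
because of the relation `(1 2)(1 3)(2 3) = (2 3)(1 3)(1 2)` between transpositions.
-/

open Matrix

namespace Stmt3

variable {n : ℕ}

/-- `R ⊗ I` acting in tensor factors 1 and 2 of `ℂⁿ ⊗ ℂⁿ ⊗ ℂⁿ`. -/
def lift12 (R : Matrix (Fin n × Fin n) (Fin n × Fin n) ℂ) :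
    Matrix (Fin n × Fin n × Fin n) (Fin n × Fin n × Fin n) ℂ :=
  fun i j => R (i.1, i.2.1) (j.1, j.2.1) * (if i.2.2 = j.2.2 then 1 else 0)

/-- `I ⊗ R` acting in tensor factors 2 and 3. -/
def lift23 (R : Matrix (Fin n × Fin n) (Fin n × Fin n) ℂ) :
    Matrix (Fin n × Fin n × Fin n) (Fin n × Fin n × Fin n) ℂ :=
  fun i j => (if i.1 = j.1 then 1 else 0) * R (i.2.1, i.2.2) (j.2.1, j.2.2)

/-- `R` acting in tensor factors 1 and 3; equal to `(P⊗I)(I⊗R)(P⊗I)` with `P` the flip. -/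
def lift13 (R : Matrix (Fin n × Fin n) (Fin n × Fin n) ℂ) :
    Matrix (Fin n × Fin n × Fin n) (Fin n × Fin n × Fin n) ℂ :=
  fun i j => R (i.1, i.2.2) (j.1, j.2.2) * (if i.2.1 = j.2.1 then 1 else 0)

/-- The permutation matrix `σ` with `σ(u⊗v⊗w) = w⊗u⊗v`. -/
def sigma3 : Matrix (Fin n × Fin n × Fin n) (Fin n × Fin n × Fin n) ℂ :=
  fun i j => if i.1 = j.2.2 ∧ i.2.1 = j.1 ∧ i.2.2 = j.2.1 then 1 else 0

/-- The permutation matrix `τ` with `τ(u⊗v⊗w) = v⊗w⊗u`. -/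
def tau3 : Matrix (Fin n × Fin n × Fin n) (Fin n × Fin n × Fin n) ℂ :=
  fun i j => if i.1 = j.2.1 ∧ i.2.1 = j.2.2 ∧ i.2.2 = j.1 then 1 else 0

/-- The quantum Yang-Baxter equation `R₁₂R₁₃R₂₃ = R₂₃R₁₃R₁₂`. -/
def QYBE (R : Matrix (Fin n × Fin n) (Fin n × Fin n) ℂ) : Prop :=
  lift12 R * lift13 R * lift23 R = lift23 R * lift13 R * lift12 R

/-- The modified quantum Yang-Baxter equation with parameter `l`. -/
def MQYBE (R : Matrix (Fin n × Fin n) (Fin n × Fin n) ℂ) (l : ℂ) : Prop :=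
  lift12 R * lift13 R * lift23 R - lift23 R * lift13 R * lift12 R =
    l • (sigma3 * lift12 R - tau3 * lift23 R)

/-- The set of solutions of the quantum Yang–Baxter equation. -/
def qybeSet (n : ℕ) : Set (Matrix (Fin n × Fin n) (Fin n × Fin n) ℂ) :=
  {R | QYBE R}

/-- The set of solutions of the modified quantum Yang–Baxter equation for some nonzero
parameter. -/
def mqybeSet (n : ℕ) : Set (Matrix (Fin n × Fin n) (Fin n × Fin n) ℂ) :=
  {R | ∃ l : ℂ, l ≠ 0 ∧ MQYBE R l}

section LinearDependence

theorem not_linearIndependent_pair_iff {K V : Type*} [DivisionRing K] [AddCommGroup V] [Module K V]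
    {x y : V} : ¬ LinearIndependent K ![x, y] ↔ x = 0 ∨ ∃ c : K, y = c • x := by
  obtain rfl | hx := eq_or_ne x 0
  · simpa using fun h : LinearIndependent K ![0, y] ↦ h.ne_zero 0 rfl
  · simp [LinearIndependent.pair_iff' hx, hx, eq_comm]

theorem isClosed_setOfPred_eq_zero_or_exists_eq_smul {X 𝕜 E : Type*} [TopologicalSpace X]
    [NontriviallyNormedField 𝕜] [CompleteSpace 𝕜] [NormedAddCommGroup E] [NormedSpace 𝕜 E]
    {f g : X → E} (hf : Continuous f) (hg : Continuous g) :
    IsClosed {x | g x = 0 ∨ ∃ c : 𝕜, f x = c • g x} := by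
  simp only [← not_linearIndependent_pair_iff]
  exact (isOpen_setOfPred_linearIndependent.preimage
    (hg.matrixVecCons (hf.matrixVecCons continuous_const))).isClosed_compl

end LinearDependence

section Continuity

@[fun_prop]
theorem continuous_lift12 : Continuous (lift12 (n := n)) :=
  continuous_matrix fun _ _ ↦ (continuous_id.matrix_elem _ _).mul continuous_const

@[fun_prop]
theorem continuous_lift13 : Continuous (lift13 (n := n)) :=
  continuous_matrix fun _ _ ↦ (continuous_id.matrix_elem _ _).mul continuous_const

@[fun_prop]
theorem continuous_lift23 : Continuous (lift23 (n := n)) :=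
  continuous_matrix fun _ _ ↦ continuous_const.mul (continuous_id.matrix_elem _ _)

-- The topology induced by the elementwise norm is definitionally the entrywise topology.
open scoped Matrix.Norms.Elementwise in
theorem eq_or_exists_mqybe_of_mem_closure {R : Matrix (Fin n × Fin n) (Fin n × Fin n) ℂ}
    (hR : R ∈ closure (mqybeSet n)) :
    sigma3 * lift12 R = tau3 * lift23 R ∨ ∃ l, MQYBE R l := by
  rw [← sub_eq_zero]
  refine closure_minimal ?_ (isClosed_setOfPred_eq_zero_or_exists_eq_smul (𝕜 := ℂ)
    (f := fun S ↦ lift12 S * lift13 S * lift23 S - lift23 S * lift13 S * lift12 S)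
    (g := fun S ↦ sigma3 * lift12 S - tau3 * lift23 S) (by fun_prop) (by fun_prop)) hR
  rintro S ⟨l, -, hS⟩
  exact Or.inr ⟨l, hS⟩

end Continuity

theorem mqybe_zero_iff {R : Matrix (Fin n × Fin n) (Fin n × Fin n) ℂ} : MQYBE R 0 ↔ QYBE R := by
  rw [MQYBE, QYBE, zero_smul, sub_eq_zero]

section Smul

variable (c : ℂ) (R : Matrix (Fin n × Fin n) (Fin n × Fin n) ℂ)

theorem lift12_smul : lift12 (c • R) = c • lift12 R := by
  ext
  simp [lift12]

theorem lift13_smul : lift13 (c • R) = c • lift13 R := by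
  ext
  simp [lift13]

theorem lift23_smul : lift23 (c • R) = c • lift23 R := by
  ext
  simp [lift23]

variable {R} in
theorem QYBE.smul (hR : QYBE R) : QYBE (c • R) := by
  have hR' : lift12 R * lift13 R * lift23 R = lift23 R * lift13 R * lift12 R := hR
  simp only [QYBE, lift12_smul, lift13_smul, lift23_smul, smul_mul_assoc, mul_smul_comm, hR']

end Smul

section Flip

theorem permMatrix_apply {ι A : Type*} [DecidableEq ι] [Zero A] [One A] (e : Equiv.Perm ι)
    (i j : ι) : e.permMatrix A i j = if e i = j then 1 else 0 := by
  simp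

/-- The transposition of the first two of three coordinates. -/
@[simps apply]
def swap12 (α : Type*) : Equiv.Perm (α × α × α) where
  toFun i := (i.2.1, i.1, i.2.2)
  invFun i := (i.2.1, i.1, i.2.2)

/-- The transposition of the outer two of three coordinates. -/
@[simps apply]
def swap13 (α : Type*) : Equiv.Perm (α × α × α) where
  toFun i := (i.2.2, i.2.1, i.1)
  invFun i := (i.2.2, i.2.1, i.1)

/-- The transposition of the last two of three coordinates. -/
@[simps apply]
def swap23 (α : Type*) : Equiv.Perm (α × α × α) where
  toFun i := (i.1, i.2.2, i.2.1)
  invFun i := (i.1, i.2.2, i.2.1)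

/-- The flip matrix `P`, which exchanges the tensor factors of `ℂⁿ ⊗ ℂⁿ`. -/
def flipMatrix (n : ℕ) : Matrix (Fin n × Fin n) (Fin n × Fin n) ℂ :=
  Equiv.Perm.permMatrix ℂ (Equiv.prodComm (Fin n) (Fin n))

theorem swap23_mul_swap13_mul_swap12 (α : Type*) :
    swap23 α * swap13 α * swap12 α = swap12 α * swap13 α * swap23 α :=
  rfl

theorem flipMatrix_apply (i j k l : Fin n) :
    flipMatrix n (i, j) (k, l) = if i = l ∧ j = k then 1 else 0 := by
  simp [flipMatrix, and_comm]

theorem lift12_flipMatrix : lift12 (flipMatrix n) = (swap12 (Fin n)).permMatrix ℂ := by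
  ext ⟨a, b, c⟩ ⟨x, y, z⟩
  grind [lift12, flipMatrix_apply, permMatrix_apply, swap12_apply]

theorem lift13_flipMatrix : lift13 (flipMatrix n) = (swap13 (Fin n)).permMatrix ℂ := by
  ext ⟨a, b, c⟩ ⟨x, y, z⟩
  grind [lift13, flipMatrix_apply, permMatrix_apply, swap13_apply]

theorem lift23_flipMatrix : lift23 (flipMatrix n) = (swap23 (Fin n)).permMatrix ℂ := by
  ext ⟨a, b, c⟩ ⟨x, y, z⟩
  grind [lift23, flipMatrix_apply, permMatrix_apply, swap23_apply]

theorem qybe_flipMatrix (n : ℕ) : QYBE (flipMatrix n) := by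
  rw [QYBE, lift12_flipMatrix, lift13_flipMatrix, lift23_flipMatrix]
  simp only [← permMatrix_mul, ← mul_assoc, swap23_mul_swap13_mul_swap12]

end Flip

section Rotation

/-- The cyclic rotation of three coordinates underlying `sigma3`; its inverse underlies `tau3`.
It acts on row indices, so `sigma3` sends the basis vector with index `rotate _ i` to the one with
index `i`. -/
def rotate (α : Type*) : Equiv.Perm (α × α × α) :=
  (Equiv.prodComm α (α × α)).trans (Equiv.prodAssoc α α α)

theorem rotate_apply {α : Type*} (a b c : α) : rotate α (a, b, c) = (b, c, a) :=
  rfl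

theorem rotate_inv_apply {α : Type*} (a b c : α) : (rotate α)⁻¹ (a, b, c) = (c, a, b) :=
  rfl

theorem sigma3_eq_permMatrix : sigma3 = (rotate (Fin n)).permMatrix ℂ := by
  ext ⟨a, b, c⟩ ⟨x, y, z⟩
  grind [sigma3, permMatrix_apply, rotate_apply]

theorem tau3_eq_permMatrix : tau3 = (rotate (Fin n))⁻¹.permMatrix ℂ := by
  ext ⟨a, b, c⟩ ⟨x, y, z⟩
  grind [tau3, permMatrix_apply, rotate_inv_apply]

variable {ι : Type*} (M : Matrix (Fin n × Fin n × Fin n) ι ℂ)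

theorem sigma3_mul : sigma3 (n := n) * M = M.submatrix (rotate (Fin n)) id := by
  rw [sigma3_eq_permMatrix, PEquiv.toMatrix_toPEquiv_mul]

theorem tau3_mul : tau3 (n := n) * M = M.submatrix ⇑(rotate (Fin n))⁻¹ id := by
  rw [tau3_eq_permMatrix, PEquiv.toMatrix_toPEquiv_mul]

theorem exists_eq_smul_flipMatrix {R : Matrix (Fin n × Fin n) (Fin n × Fin n) ℂ}
    (h : sigma3 * lift12 R = tau3 * lift23 R) : ∃ c : ℂ, R = c • flipMatrix n := by
  have entry (a b c x y z : Fin n) :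
      R (b, c) (x, y) * (if a = z then 1 else 0) = (if c = x then 1 else 0) * R (a, b) (y, z) := by
    rw [sigma3_mul, tau3_mul] at h
    exact congrFun₂ h (a, b, c) (x, y, z)
  have eq_zero {j k : Fin n} (hjk : j ≠ k) (i l : Fin n) : R (i, j) (k, l) = 0 := by
    simpa [hjk] using entry i i j k l i
  have rotate_entry (m i j l : Fin n) : R (i, j) (j, l) = R (m, i) (l, m) := by
    simpa using entry m i j j l m
  obtain _ | _ := isEmpty_or_nonempty (Fin n)
  · exact ⟨0, Subsingleton.elim _ _⟩
  let z : Fin n := Classical.arbitrary _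
  refine ⟨R (z, z) (z, z), ?_⟩
  ext ⟨i, j⟩ ⟨k, l⟩
  rw [Matrix.smul_apply, flipMatrix_apply]
  obtain rfl | hjk := eq_or_ne j k
  · obtain rfl | hil := eq_or_ne i l
    · simp [rotate_entry z i j i, rotate_entry z z i z]
    · simp [rotate_entry i i j l, eq_zero hil, hil]
  · simp [eq_zero hjk, hjk]

end Rotation

/-- Boundary solutions: every matrix in the closure of the set of solutions of the modified
quantum Yang–Baxter equation which is not itself such a solution satisfies the quantum
Yang–Baxter equation. -/
theorem closure_mqybe_diff_subset_qybe (n : ℕ) (hn : 2 ≤ n) :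
    closure (mqybeSet n) \ mqybeSet n ⊆ qybeSet n := by
  rintro R ⟨hR, hR'⟩
  obtain h | ⟨l, hl⟩ := eq_or_exists_mqybe_of_mem_closure hR
  · obtain ⟨c, rfl⟩ := exists_eq_smul_flipMatrix h
    exact (qybe_flipMatrix n).smul c
  · obtain rfl : l = 0 := of_not_not fun hl₀ ↦ hR' ⟨l, hl₀, hl⟩
    exact mqybe_zero_iff.mp hl

end Stmt3
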